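/- For every k ≥ 2 there exists D = D(k) > 0 such that the following holds for all n. Let F be the finite field with 2^m elements where 2n ≤ 2^m ≤ 4n, let τ : [n] ↪ F* be injective, let C > 0, let L ∈ H_{k−1}(n) be such that τ(L) is C-affine-bounded, and let S ⊆ K_k(L) be a K_k-decomposition of L. Then for every facet f of [n] with f ∉ L: Σ_{F ∈ FO} Σ_{s ∈ S} |{a ∈ F^k : F_1 τ(s) + F_2 a = τ(f)}| ≤ D·C·|F|·|L|. -/

import Mathlib

open Finset

section LinOps

variable (F : Type*) [Field F] (k : ℕ)

/-- Inclusion of the first block: `x ↦ (x, 0)`. -/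
def inlMap : (Fin k → F) →ₗ[F] ((Fin k ⊕ Fin k) → F) where
  toFun x := Sum.elim x 0
  map_add' x y := by funext s; cases s <;> simp
  map_smul' c x := by funext s; cases s <;> simp

/-- Inclusion of the second block: `a ↦ (0, a)`. -/
def inrMap : (Fin k → F) →ₗ[F] ((Fin k ⊕ Fin k) → F) where
  toFun a := Sum.elim 0 a
  map_add' x y := by funext s; cases s <;> simp
  map_smul' c x := by funext s; cases s <;> simp

variable {F k}

/-- For `T : F^{2k} → M`, the map `T₁ : F^k → M`, `x ↦ T(x,0)`. -/
def leftPart {M : Type*} [AddCommMonoid M] [Module F M]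
    (T : ((Fin k ⊕ Fin k) → F) →ₗ[F] M) : (Fin k → F) →ₗ[F] M :=
  T ∘ₗ inlMap F k

/-- For `T : F^{2k} → M`, the map `T₂ : F^k → M`, `a ↦ T(0,a)`. -/
def rightPart {M : Type*} [AddCommMonoid M] [Module F M]
    (T : ((Fin k ⊕ Fin k) → F) →ₗ[F] M) : (Fin k → F) →ₗ[F] M :=
  T ∘ₗ inrMap F k

variable (F k)

/-- The operator `C : F^k → F^{2k}` given by the block matrix `[I; J + I]`. -/
def Cop : (Fin k → F) →ₗ[F] ((Fin k ⊕ Fin k) → F) where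
  toFun x := Sum.elim x fun i => x i + ∑ j, x j
  map_add' x y := by
    funext s; cases s <;> simp [Finset.sum_add_distrib] <;> ring
  map_smul' c x := by
    funext s; cases s <;> simp [Finset.mul_sum, mul_add]

variable {k}

/-- The operator `E_I : F^{2k} → F^k` given by the block matrix `[X_{[k]\I} X_I]`. -/
def Eop (I : Finset (Fin k)) : ((Fin k ⊕ Fin k) → F) →ₗ[F] (Fin k → F) where
  toFun y i := if i ∈ I then y (Sum.inr i) else y (Sum.inl i)
  map_add' x y := by funext i; by_cases h : i ∈ I <;> simp [h]
  map_smul' c x := by funext i; by_cases h : i ∈ I <;> simp [h]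

variable {F}

/-- The map `Fin (k-1) → Fin k` skipping `i`. -/
def delIdx {k : ℕ} (i : Fin k) (j : Fin (k - 1)) : Fin k :=
  if (j : ℕ) < (i : ℕ) then ⟨j, by have := j.isLt; omega⟩
  else ⟨(j : ℕ) + 1, by have := j.isLt; omega⟩

variable (F)

/-- The projection `P_i : F^k → F^{k-1}` deleting the `i`-th coordinate. -/
def Pop (i : Fin k) : (Fin k → F) →ₗ[F] (Fin (k - 1) → F) :=
  LinearMap.funLeft F F (delIdx i)

variable (k)

/-- The vertex operators `VO = VO₁ ∪ VO₂`. -/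
def VO : Set (((Fin k ⊕ Fin k) → F) →ₗ[F] F) :=
  {V | (∃ i : Fin k, V = LinearMap.proj i ∘ₗ Eop F (∅ : Finset (Fin k)) ∨
          V = LinearMap.proj i ∘ₗ Eop F (Finset.univ : Finset (Fin k))) ∨
       (∃ (i : Fin k) (I : Finset (Fin k)), I.Nonempty ∧ Even I.card ∧
          V = LinearMap.proj i ∘ₗ Eop F (Finset.univ : Finset (Fin k)) ∘ₗ Cop F k ∘ₗ Eop F I)}

/-- The facet operators `FO₁ = {P_i E_∅}`. -/
def FO1 : Set (((Fin k ⊕ Fin k) → F) →ₗ[F] (Fin (k - 1) → F)) :=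
  {T | ∃ i : Fin k, T = Pop F i ∘ₗ Eop F (∅ : Finset (Fin k))}

/-- The facet operators `FO₂ = {P_i E_J C E_I : |J| even, I ≠ ∅, |I| even}`. -/
def FO2 : Set (((Fin k ⊕ Fin k) → F) →ₗ[F] (Fin (k - 1) → F)) :=
  {T | ∃ (i : Fin k) (J I : Finset (Fin k)), Even J.card ∧ I.Nonempty ∧ Even I.card ∧
        T = Pop F i ∘ₗ Eop F J ∘ₗ Cop F k ∘ₗ Eop F I}

/-- The facet operators `FO = FO₁ ∪ FO₂`. -/
def FO : Set (((Fin k ⊕ Fin k) → F) →ₗ[F] (Fin (k - 1) → F)) :=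
  FO1 F k ∪ FO2 F k

/-- The edge operators `EO = EO₁ ∪ EO₂`. -/
def EO : Set (((Fin k ⊕ Fin k) → F) →ₗ[F] (Fin k → F)) :=
  {T | (∃ I : Finset (Fin k), Odd I.card ∧ T = Eop F I) ∨
       (∃ J I : Finset (Fin k), J.Nonempty ∧ I.Nonempty ∧ Even I.card ∧
          T = Eop F J ∘ₗ Cop F k ∘ₗ Eop F I)}

end LinOps

/-- A set `S ⊆ F^ι` is `C`-affine-bounded if for every affine subspace `A` of
dimension at least 1, `|A ∩ S| ≤ C·|A|·|S|/|F|^{|ι|}`. -/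
def AffineBounded (F : Type*) [Field F] [Fintype F] {ι : Type*} [Fintype ι]
    (C : ℝ) (S : Set (ι → F)) : Prop :=
  ∀ A : AffineSubspace F (ι → F), (A : Set (ι → F)).Nonempty →
    1 ≤ Module.finrank F A.direction →
    (Set.ncard ((A : Set (ι → F)) ∩ S) : ℝ) ≤
      C * (Nat.card (A : Set (ι → F))) * (Set.ncard S) / (Fintype.card F : ℝ) ^ (Fintype.card ι)

open Finset

/-- A set `S` of `k`-subsets, each having all its `(k-1)`-subsets in `G`,
such that every facet of `G` lies in exactly one edge of `S`. -/
def IsKDecompositionOf {V : Type*} [DecidableEq V] (k : ℕ) (G S : Finset (Finset V)) : Prop :=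
  (∀ e ∈ S, e.card = k ∧ ∀ f ⊆ e, f.card = k - 1 → f ∈ G) ∧
  (∀ f ∈ G, ∃! e, e ∈ S ∧ f ⊆ e)

open Classical in
/-- The facet operators `FO = FO₁ ∪ FO₂` as a finite set. -/
noncomputable def FOfin (F : Type*) [Field F] (k : ℕ) :
    Finset (((Fin k ⊕ Fin k) → F) →ₗ[F] (Fin (k - 1) → F)) :=
  (Finset.univ.image fun i : Fin k => Pop F i ∘ₗ Eop F (∅ : Finset (Fin k))) ∪
  (((Finset.univ : Finset (Fin k × Finset (Fin k) × Finset (Fin k))).filter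
      fun t => Even t.2.1.card ∧ t.2.2.Nonempty ∧ Even t.2.2.card).image
    fun t => Pop F t.1 ∘ₗ Eop F t.2.1 ∘ₗ Cop F k ∘ₗ Eop F t.2.2)

section LinearCounting

variable {F : Type*} [Field F] [Fintype F] {ι : Type*} [Fintype ι]

/-- If `range g ⊔ R = ⊤` and `R ≠ 0`, then a `C`-affine-bounded set meets the affine subspace
`{w | g w - t ∈ R}`, which is empty or of the dimension of `R`, in few points. -/
lemma AffineBounded.ncard_setOf_sub_mem_le {C : ℝ} (hC : 0 ≤ C) {Q : Set (ι → F)}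
    (hQ : AffineBounded F C Q) (g : (ι → F) →ₗ[F] (ι → F)) (R : Submodule F (ι → F))
    (hR : R ≠ ⊥) (hg : LinearMap.range g ⊔ R = ⊤) (t : ι → F) :
    (Set.ncard {w ∈ Q | g w - t ∈ R} : ℝ) ≤
      C * (Fintype.card F : ℝ) ^ Module.finrank F R * Set.ncard Q /
        (Fintype.card F : ℝ) ^ Fintype.card ι := by
  rcases Set.eq_empty_or_nonempty {w ∈ Q | g w - t ∈ R} with h | ⟨w₀, -, hw₀⟩
  · rw [h, Set.ncard_empty]
    simp only [Nat.cast_zero]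
    positivity
  have hfin : Module.finrank F (R.comap g) = Module.finrank F R := by
    have hsurj : Function.Surjective (R.mkQ ∘ₗ g) := by
      rw [← LinearMap.range_eq_top, LinearMap.range_comp]
      have h := congrArg (Submodule.map R.mkQ) hg
      rwa [Submodule.map_sup, Submodule.mkQ_map_self, sup_bot_eq, Submodule.map_top,
        Submodule.range_mkQ] at h
    have h1 := LinearMap.finrank_range_add_finrank_ker (R.mkQ ∘ₗ g)
    rw [LinearMap.range_eq_top.2 hsurj, finrank_top, LinearMap.ker_comp, Submodule.ker_mkQ] at h1
    have h2 := R.finrank_quotient_add_finrank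
    omega
  have hdim : 1 ≤ Module.finrank F R :=
    Nat.one_le_iff_ne_zero.2 fun h => hR (Submodule.finrank_eq_zero.1 h)
  set A : AffineSubspace F (ι → F) := AffineSubspace.mk' w₀ (R.comap g) with hA
  have hmem : ∀ w, w ∈ A ↔ g w - t ∈ R := fun w => by
    rw [hA, AffineSubspace.mem_mk', vsub_eq_sub, Submodule.mem_comap, map_sub,
      ← Submodule.add_mem_iff_left R hw₀, sub_add_sub_cancel]
  have hcard : Nat.card (A : Set (ι → F)) = Fintype.card F ^ Module.finrank F R := by
    rw [← hfin, ← Nat.card_eq_fintype_card, ← Module.natCard_eq_pow_finrank (K := F)]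
    refine Nat.card_congr ((Equiv.subRight w₀).subtypeEquiv fun w => ?_)
    rw [SetLike.mem_coe, hA, AffineSubspace.mem_mk']
    rfl
  have hset : {w ∈ Q | g w - t ∈ R} = (A : Set (ι → F)) ∩ Q := by
    ext w
    simp [hmem, and_comm]
  have h := hQ A ⟨w₀, (hmem w₀).2 hw₀⟩ (by rwa [hA, AffineSubspace.direction_mk', hfin])
  rw [hcard, Nat.cast_pow] at h
  rwa [hset]

end LinearCounting

lemma delIdx_injective {k : ℕ} (i : Fin k) : Function.Injective (delIdx i) := by
  intro a b h
  unfold delIdx at h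
  split_ifs at h with h1 h2 h2 <;> have h' := congrArg Fin.val h <;> simp at h' <;>
    apply Fin.ext <;> omega

lemma exists_delIdx_eq {k : ℕ} {i p : Fin k} (h : p ≠ i) : ∃ j, delIdx i j = p := by
  have hne : (p : ℕ) ≠ i := fun e => h (Fin.ext e)
  rcases lt_or_gt_of_ne hne with hlt | hlt
  · exact ⟨⟨p, by omega⟩, by simp [delIdx, hlt]⟩
  · refine ⟨⟨p - 1, by omega⟩, ?_⟩
    have : ¬ ((p : ℕ) - 1 < i) := by omega
    apply Fin.ext
    simp only [delIdx, this, if_false]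
    omega

section Operators

variable {F : Type*} [Field F] {k : ℕ}

lemma mem_FOfin {T : ((Fin k ⊕ Fin k) → F) →ₗ[F] (Fin (k - 1) → F)} :
    T ∈ FOfin F k ↔ T ∈ FO1 F k ∨ T ∈ FO2 F k := by
  classical
  simp [FOfin, FO1, FO2, eq_comm, and_assoc]

variable (F k) in
lemma card_FOfin_le :
    (FOfin F k).card ≤ k + Fintype.card (Fin k × Finset (Fin k) × Finset (Fin k)) := by
  classical
  refine (Finset.card_union_le _ _).trans (add_le_add ?_ ?_)
  · exact Finset.card_image_le.trans (by simp)
  · exact Finset.card_image_le.trans (Finset.card_filter_le _ _)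

lemma leftPart_add_rightPart {M : Type*} [AddCommMonoid M] [Module F M]
    (T : ((Fin k ⊕ Fin k) → F) →ₗ[F] M) (x a : Fin k → F) :
    leftPart T x + rightPart T a = T (Sum.elim x a) := by
  simp only [leftPart, rightPart, LinearMap.comp_apply, ← map_add]
  congr 1
  funext s
  cases s <;> simp [inlMap, inrMap]

lemma range_leftPart_sup_range_rightPart {M : Type*} [AddCommGroup M] [Module F M]
    {T : ((Fin k ⊕ Fin k) → F) →ₗ[F] M} (hT : Function.Surjective T) :
    LinearMap.range (leftPart T) ⊔ LinearMap.range (rightPart T) = ⊤ := by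
  rw [eq_top_iff]
  rintro z -
  obtain ⟨y, rfl⟩ := hT z
  rw [← Sum.elim_comp_inl_inr y, ← leftPart_add_rightPart]
  exact Submodule.add_mem_sup (LinearMap.mem_range_self _ _) (LinearMap.mem_range_self _ _)

lemma Eop_Cop_apply (J : Finset (Fin k)) (y : Fin k → F) (j : Fin k) :
    Eop F J (Cop F k y) j = y j + if j ∈ J then ∑ p, y p else 0 := by
  by_cases h : j ∈ J <;> simp [Eop, Cop, h]

lemma Eop_Cop_surjective [CharP F 2] {J : Finset (Fin k)} (hJ : Even J.card) :
    Function.Surjective (Eop F J ∘ₗ Cop F k) := by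
  refine Function.Involutive.surjective fun y => ?_
  have hJ0 : (J.card : F) = 0 := (CharP.cast_eq_zero_iff F 2 _).2 hJ.two_dvd
  have hsum : ∑ p, Eop F J (Cop F k y) p = ∑ p, y p := by
    simp [Eop_Cop_apply, Finset.sum_add_distrib, hJ0]
  funext j
  simp only [LinearMap.comp_apply]
  rw [Eop_Cop_apply, hsum, Eop_Cop_apply, add_assoc, CharTwo.add_self_eq_zero, add_zero]

lemma Eop_surjective (I : Finset (Fin k)) : Function.Surjective (Eop F I) := fun y =>
  ⟨Sum.elim y y, by funext i; simp [Eop]⟩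

lemma facetOp_surjective [CharP F 2] (i : Fin k) {J : Finset (Fin k)} (hJ : Even J.card)
    (I : Finset (Fin k)) :
    Function.Surjective (Pop F i ∘ₗ Eop F J ∘ₗ Cop F k ∘ₗ Eop F I) :=
  (LinearMap.funLeft_surjective_of_injective F F _ (delIdx_injective i)).comp
    ((Eop_Cop_surjective hJ).comp (Eop_surjective I))

lemma leftPart_facetOp_single (i : Fin k) (J : Finset (Fin k)) {I : Finset (Fin k)} {p : Fin k}
    (hp : p ∈ I) (c : F) :
    leftPart (Pop F i ∘ₗ Eop F J ∘ₗ Cop F k ∘ₗ Eop F I) (Pi.single p c) = 0 := by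
  have h : Eop F I (inlMap F k (Pi.single p c)) = 0 := by
    funext j
    by_cases hj : j ∈ I
    · simp [Eop, inlMap, hj]
    · have : j ≠ p := fun e => hj (e ▸ hp)
      simp [Eop, inlMap, hj, this]
  simp [leftPart, h]

lemma range_rightPart_facetOp_ne_bot [CharP F 2] (i : Fin k) (J : Finset (Fin k))
    {I : Finset (Fin k)} (hI : I.Nonempty) (hI2 : Even I.card) :
    LinearMap.range (rightPart (Pop F i ∘ₗ Eop F J ∘ₗ Cop F k ∘ₗ Eop F I)) ≠ ⊥ := by
  have hone : 1 < I.card := by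
    have := hI.card_pos
    obtain ⟨r, hr⟩ := hI2
    omega
  obtain ⟨p, hp, hpi⟩ := Finset.exists_mem_ne hone i
  obtain ⟨p', hp', hpp'⟩ := Finset.exists_mem_ne hone p
  obtain ⟨j, hj⟩ := exists_delIdx_eq hpi
  set y : Fin k → F := Pi.single p 1 + Pi.single p' 1 with hy
  have hE : Eop F I (inrMap F k y) = y := by
    funext q
    by_cases hq : q ∈ I
    · simp [Eop, inrMap, hq]
    · have h1 : q ≠ p := fun e => hq (e ▸ hp)
      have h2 : q ≠ p' := fun e => hq (e ▸ hp')
      simp [Eop, inrMap, hq, hy, h1, h2]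
  have hsum : ∑ q, y q = 0 := by
    simp [hy, Finset.sum_add_distrib, CharTwo.add_self_eq_zero]
  intro hbot
  have hz := congrFun (LinearMap.congr_fun (LinearMap.range_eq_bot.1 hbot) y) j
  simp only [rightPart, LinearMap.comp_apply, hE, Pop, LinearMap.funLeft_apply, hj,
    Eop_Cop_apply, hsum] at hz
  simp [hy, hpp'.symm] at hz

/-- A linear map on `F^k` that kills the `p`-th basis vector factors through deletion of the
`p`-th coordinate. -/
lemma exists_comp_Pop_eq {M : Type*} [AddCommGroup M] [Module F M] (g : (Fin k → F) →ₗ[F] M)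
    {p : Fin k} (hg : ∀ c, g (Pi.single p c) = 0) :
    ∃ g' : (Fin (k - 1) → F) →ₗ[F] M, g = g' ∘ₗ Pop F p := by
  have hsurj : Function.Surjective (Pop F p) :=
    LinearMap.funLeft_surjective_of_injective F F _ (delIdx_injective p)
  obtain ⟨r, hr⟩ := (Pop F p).exists_rightInverse_of_surjective (LinearMap.range_eq_top.2 hsurj)
  refine ⟨g ∘ₗ r, LinearMap.ext fun x => ?_⟩
  set z := x - r (Pop F p x) with hz
  have hPz : Pop F p z = 0 := by
    rw [hz, map_sub, ← LinearMap.comp_apply (Pop F p) r, hr, LinearMap.id_apply, sub_self]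
  have hzs : z = Pi.single p (z p) := by
    funext q
    by_cases hq : q = p
    · subst hq
      simp
    · obtain ⟨j, rfl⟩ := exists_delIdx_eq hq
      rw [Pi.single_eq_of_ne hq]
      exact congrFun hPz j
  have h0 : g z = 0 := by rw [hzs, hg]
  rwa [hz, map_sub, sub_eq_zero] at h0

lemma ncard_setOf_add_eq_le [Fintype F] {M : Type*} [AddCommGroup M] [Module F M]
    (g : (Fin k → F) →ₗ[F] M) (u t : M) :
    Set.ncard {a : Fin k → F | u + g a = t} ≤
      Fintype.card F ^ Module.finrank F (LinearMap.ker g) := by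
  rcases Set.eq_empty_or_nonempty {a : Fin k → F | u + g a = t} with h | ⟨a₀, ha₀⟩
  · simp [h]
  · rw [← Nat.card_eq_fintype_card, ← Module.natCard_eq_pow_finrank (K := F)]
    refine Set.ncard_le_ncard_of_injOn (t := (LinearMap.ker g : Set (Fin k → F)))
      (fun a => a - a₀) (fun a ha => ?_) (fun a _ b _ h => sub_left_injective h)
      (Set.toFinite _)
    have h : u + g a = u + g a₀ := ha.trans ha₀.symm
    simpa [sub_eq_zero] using h

end Operators

lemma injective_of_image_univ_eq {α : Type*} [DecidableEq α] {d : ℕ} {u : Fin d → α}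
    {s : Finset α} (h : Finset.image u Finset.univ = s) (hs : s.card = d) :
    Function.Injective u := by
  rw [← Set.injOn_univ, ← Finset.coe_univ, ← Finset.card_image_iff, h, hs, Finset.card_univ,
    Fintype.card_fin]

/-- Two enumerations of the same finite set differ by a permutation. -/
lemma exists_perm_comp_eq {α : Type*} [DecidableEq α] {d : ℕ} {u v : Fin d → α}
    (hu : Function.Injective u)
    (h : Finset.image u Finset.univ = Finset.image v Finset.univ) :
    ∃ σ : Equiv.Perm (Fin d), v ∘ σ = u := by
  have hmem : ∀ j, ∃ l, v l = u j := fun j => by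
    have : u j ∈ Finset.image v Finset.univ := h ▸ Finset.mem_image_of_mem u (Finset.mem_univ j)
    simpa using this
  choose σ hσ using hmem
  have hinj : Function.Injective σ := fun a b hab => hu (by rw [← hσ, ← hσ, hab])
  exact ⟨Equiv.ofBijective σ (Finite.injective_iff_bijective.1 hinj), funext hσ⟩

/-- The edges of a decomposition whose `p`-th facet lies in the affine subspace
`{w | g w - t ∈ R}` are few. -/
lemma ncard_edges_facet_sub_mem_le {F : Type*} [Field F] [Fintype F] {n k : ℕ}
    {τ : Fin n → F} (hτ : Function.Injective τ) {C : ℝ} (hC : 0 ≤ C)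
    {L S : Finset (Finset (Fin n))}
    (hS : IsKDecompositionOf k L S) {ordL : Finset (Fin n) → Fin (k - 1) → Fin n}
    (hordL : ∀ f : Finset (Fin n), f.card = k - 1 → Finset.image (ordL f) Finset.univ = f)
    {ordS : Finset (Fin n) → Fin k → Fin n}
    (hordS : ∀ e : Finset (Fin n), e.card = k → Finset.image (ordS e) Finset.univ = e)
    (hQ : AffineBounded F C ((fun f => τ ∘ ordL f) '' (L : Set (Finset (Fin n)))))
    (p : Fin k) (g : (Fin (k - 1) → F) →ₗ[F] (Fin (k - 1) → F))
    (R : Submodule F (Fin (k - 1) → F)) (hR : R ≠ ⊥) (hg : LinearMap.range g ⊔ R = ⊤)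
    (t : Fin (k - 1) → F) :
    (Set.ncard {s | s ∈ S ∧ g (Pop F p (τ ∘ ordS s)) - t ∈ R} : ℝ) ≤
      (k - 1).factorial * (C * (Fintype.card F : ℝ) ^ Module.finrank F R * L.card /
        (Fintype.card F : ℝ) ^ (k - 1)) := by
  classical
  set Q := (fun f => τ ∘ ordL f) '' (L : Set (Finset (Fin n))) with hQdef
  set B := {s | s ∈ S ∧ g (Pop F p (τ ∘ ordS s)) - t ∈ R} with hB
  set facet : Finset (Fin n) → Finset (Fin n) :=
    fun s => Finset.image (ordS s ∘ delIdx p) Finset.univ with hfacet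
  have hinjS : ∀ s ∈ S, Function.Injective (ordS s ∘ delIdx p) := fun s hs =>
    (injective_of_image_univ_eq (hordS s (hS.1 s hs).1) (hS.1 s hs).1).comp (delIdx_injective p)
  have hfacet_sub : ∀ s ∈ S, facet s ⊆ s := fun s hs x hx => by
    obtain ⟨j, -, rfl⟩ := Finset.mem_image.1 hx
    exact (hordS s (hS.1 s hs).1).subset (Finset.mem_image_of_mem _ (Finset.mem_univ _))
  have hfacet_card : ∀ s ∈ S, (facet s).card = k - 1 := fun s hs => by
    rw [hfacet, Finset.card_image_of_injective _ (hinjS s hs), Finset.card_univ, Fintype.card_fin]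
  have hfacet_mem : ∀ s ∈ S, facet s ∈ L := fun s hs =>
    (hS.1 s hs).2 _ (hfacet_sub s hs) (hfacet_card s hs)
  have hfacet_inj : ∀ s ∈ S, ∀ s' ∈ S, facet s = facet s' → s = s' := fun s hs s' hs' h =>
    (hS.2 _ (hfacet_mem s hs)).unique ⟨hs, hfacet_sub s hs⟩ ⟨hs', h ▸ hfacet_sub s' hs'⟩
  have hperm : ∀ s, ∃ σ : Equiv.Perm (Fin (k - 1)),
      s ∈ S → ordL (facet s) ∘ σ = ordS s ∘ delIdx p := fun s => by
    by_cases hs : s ∈ S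
    · have h1 := hordL _ (hfacet_card s hs)
      obtain ⟨σ, hσ⟩ := exists_perm_comp_eq (hinjS s hs) h1.symm
      exact ⟨σ, fun _ => hσ⟩
    · exact ⟨1, fun h => absurd h hs⟩
  choose σ hσ using hperm
  set P : Equiv.Perm (Fin (k - 1)) → Set (Fin (k - 1) → F) := fun π =>
    {w ∈ Q | (g ∘ₗ LinearMap.funLeft F F π) w - t ∈ R} with hP
  have hPle : ∀ π, (Set.ncard (P π) : ℝ) ≤ C * (Fintype.card F : ℝ) ^ Module.finrank F R *
      L.card / (Fintype.card F : ℝ) ^ (k - 1) := fun π => by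
    have hsurj : Function.Surjective (LinearMap.funLeft F F π) :=
      LinearMap.funLeft_surjective_of_injective F F _ π.injective
    have h := hQ.ncard_setOf_sub_mem_le hC (g ∘ₗ LinearMap.funLeft F F π) R hR
      (by rwa [LinearMap.range_comp_of_range_eq_top _ (LinearMap.range_eq_top.2 hsurj)]) t
    rw [Fintype.card_fin] at h
    refine h.trans ?_
    have hQcard : Set.ncard Q ≤ L.card :=
      (Set.ncard_image_le L.finite_toSet).trans (Set.ncard_coe_finset L).le
    gcongr
  have hcover : (fun s => τ ∘ ordL (facet s)) '' B ⊆
      ⋃ π ∈ (Finset.univ : Finset (Equiv.Perm (Fin (k - 1)))), P π := by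
    rintro _ ⟨s, ⟨hs, hsR⟩, rfl⟩
    refine Set.mem_biUnion (Finset.mem_univ (σ s)) ⟨⟨_, hfacet_mem s hs, rfl⟩, ?_⟩
    have h : LinearMap.funLeft F F (σ s) (τ ∘ ordL (facet s)) = Pop F p (τ ∘ ordS s) := by
      funext j
      exact congrArg τ (congrFun (hσ s hs) j)
    rwa [LinearMap.comp_apply, h]
  have hinj : Set.InjOn (fun s => τ ∘ ordL (facet s)) B := by
    rintro s ⟨hs, -⟩ s' ⟨hs', -⟩ h
    refine hfacet_inj s hs s' hs' ?_
    rw [← hordL _ (hfacet_card s hs), ← hordL _ (hfacet_card s' hs'), hτ.comp_left h]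
  have hBle : B.ncard ≤ ∑ π, (P π).ncard := by
    rw [← hinj.ncard_image]
    exact (Set.ncard_le_ncard hcover (Set.toFinite _)).trans
      (Finset.set_ncard_biUnion_le _ _)
  calc (B.ncard : ℝ) ≤ ∑ π, ((P π).ncard : ℝ) := by exact_mod_cast hBle
    _ ≤ _ := (Finset.sum_le_sum fun π _ => hPle π)
    _ = _ := by
      rw [Finset.sum_const, Finset.card_univ, Fintype.card_perm, Fintype.card_fin, nsmul_eq_mul]

/-- The contribution of a single surjective operator `T` whose left part kills a basis vector
and whose right part is nonzero. -/
lemma sum_ncard_fiber_le {F : Type*} [Field F] [Fintype F] {n k : ℕ}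
    {τ : Fin n → F} (hτ : Function.Injective τ) {C : ℝ} (hC : 0 ≤ C)
    {L S : Finset (Finset (Fin n))}
    (hS : IsKDecompositionOf k L S) {ordL : Finset (Fin n) → Fin (k - 1) → Fin n}
    (hordL : ∀ f : Finset (Fin n), f.card = k - 1 → Finset.image (ordL f) Finset.univ = f)
    {ordS : Finset (Fin n) → Fin k → Fin n}
    (hordS : ∀ e : Finset (Fin n), e.card = k → Finset.image (ordS e) Finset.univ = e)
    (hQ : AffineBounded F C ((fun f => τ ∘ ordL f) '' (L : Set (Finset (Fin n)))))
    {T : ((Fin k ⊕ Fin k) → F) →ₗ[F] (Fin (k - 1) → F)} (hT : Function.Surjective T)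
    {p : Fin k} (hp : ∀ c, leftPart T (Pi.single p c) = 0)
    (hR : LinearMap.range (rightPart T) ≠ ⊥) (t : Fin (k - 1) → F) :
    ∑ s ∈ S, (Set.ncard {a : Fin k → F |
        leftPart T (τ ∘ ordS s) + rightPart T a = t} : ℝ) ≤
      (k - 1).factorial * (C * (Fintype.card F : ℝ) * L.card) := by
  classical
  set q : ℝ := (Fintype.card F : ℝ) with hq
  have hq0 : 0 < q := by rw [hq]; exact_mod_cast Fintype.card_pos
  set R := LinearMap.range (rightPart T) with hRdef
  obtain ⟨g, hg⟩ := exists_comp_Pop_eq (leftPart T) hp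
  have hgR : LinearMap.range g ⊔ R = ⊤ := by
    have hsurj : Function.Surjective (Pop F p) :=
      LinearMap.funLeft_surjective_of_injective F F _ (delIdx_injective p)
    rw [← range_leftPart_sup_range_rightPart hT, hg,
      LinearMap.range_comp_of_range_eq_top _ (LinearMap.range_eq_top.2 hsurj)]
  set K := Module.finrank F (LinearMap.ker (rightPart T)) with hK
  have hrank : Module.finrank F R + K = k := by
    simpa using LinearMap.finrank_range_add_finrank_ker (rightPart T)
  have hk : k - 1 + 1 = k := Nat.sub_add_cancel (Nat.one_le_of_lt p.pos)
  have hterm : ∀ s ∈ S, (Set.ncard {a : Fin k → F |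
      leftPart T (τ ∘ ordS s) + rightPart T a = t} : ℝ) ≤
      if g (Pop F p (τ ∘ ordS s)) - t ∈ R then q ^ K else 0 := fun s _ => by
    split_ifs with h
    · rw [hq]
      exact_mod_cast ncard_setOf_add_eq_le (rightPart T) _ t
    · have hempty : {a : Fin k → F | leftPart T (τ ∘ ordS s) + rightPart T a = t} = ∅ := by
        refine Set.eq_empty_of_forall_notMem fun a ha => h ⟨-a, ?_⟩
        have ha' : g (Pop F p (τ ∘ ordS s)) + rightPart T a = t := by
          rw [← LinearMap.comp_apply, ← hg]
          exact ha
        rw [← ha', map_neg]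
        abel
      simp [hempty]
  have hcount := ncard_edges_facet_sub_mem_le hτ hC hS hordL hordS hQ p g R hR hgR t
  have hset : {s | s ∈ S ∧ g (Pop F p (τ ∘ ordS s)) - t ∈ R} =
      (S.filter fun s => g (Pop F p (τ ∘ ordS s)) - t ∈ R : Set (Finset (Fin n))) := by
    ext s
    simp
  rw [hset, Set.ncard_coe_finset] at hcount
  refine (Finset.sum_le_sum hterm).trans ?_
  rw [← Finset.sum_filter, Finset.sum_const, nsmul_eq_mul]
  refine (mul_le_mul_of_nonneg_right hcount (by positivity)).trans (le_of_eq ?_)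
  have hpow : q ^ Module.finrank F R * q ^ K = q ^ (k - 1) * q := by
    rw [← pow_add, hrank, ← pow_succ, hk]
  field_simp
  linear_combination C * L.card * hpow

/-- if `τ(L)` is `C`-affine-bounded and `S` is a `K_k`-decomposition
of `L`, then for every facet `f ∉ L`,
`Σ_{T ∈ FO} Σ_{s ∈ S} |{a : T₁ τ(s) + T₂ a = τ(f)}| ≤ D·C·|F|·|L|`. -/
theorem stmt_8 (k : ℕ) (hk : 2 ≤ k) :
    ∃ D : ℝ, 0 < D ∧
      ∀ (n m : ℕ) (F : Type) [Field F] [Fintype F],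
        ringChar F = 2 → Fintype.card F = 2 ^ m → 2 * n ≤ 2 ^ m → 2 ^ m ≤ 4 * n →
        ∀ τ : Fin n → F, Function.Injective τ → (∀ v, τ v ≠ 0) →
          ∀ C : ℝ, 0 < C →
            ∀ L S : Finset (Finset (Fin n)), (∀ f ∈ L, f.card = k - 1) →
              IsKDecompositionOf k L S →
              ∀ ordL : Finset (Fin n) → Fin (k - 1) → Fin n,
                (∀ f : Finset (Fin n), f.card = k - 1 →
                    Finset.image (ordL f) Finset.univ = f) →
              ∀ ordS : Finset (Fin n) → Fin k → Fin n,
                (∀ e : Finset (Fin n), e.card = k →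
                    Finset.image (ordS e) Finset.univ = e) →
              AffineBounded F C ((fun f => τ ∘ ordL f) '' (L : Set (Finset (Fin n)))) →
              ∀ f : Finset (Fin n), f.card = k - 1 → f ∉ L →
                ∑ T ∈ FOfin F k, ∑ s ∈ S,
                    (Set.ncard {a : Fin k → F |
                        leftPart T (τ ∘ ordS s) + rightPart T a = τ ∘ ordL f} : ℝ) ≤
                  D * C * (Fintype.card F : ℝ) * (L.card : ℝ) := by
  classical
  set N : ℕ := k + Fintype.card (Fin k × Finset (Fin k) × Finset (Fin k)) with hN
  have hNpos : 0 < N := by omega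
  refine ⟨N * (k - 1).factorial, by positivity, ?_⟩
  intro n m F _ _ hchar _ _ _ τ hτ _ C hC L S _ hS ordL hordL ordS hordS hQ f hf hfL
  have : CharP F 2 := ringChar.of_eq hchar
  have hcard : (FOfin F k).card ≤ N := card_FOfin_le F k
  have hterm : ∀ T ∈ FOfin F k, ∑ s ∈ S, (Set.ncard {a : Fin k → F |
      leftPart T (τ ∘ ordS s) + rightPart T a = τ ∘ ordL f} : ℝ) ≤
      (k - 1).factorial * (C * (Fintype.card F : ℝ) * L.card) := by
    intro T hT
    rcases mem_FOfin.1 hT with ⟨i, rfl⟩ | ⟨i, J, I, hJ, hI, hI2, rfl⟩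
    · refine (Finset.sum_eq_zero fun s hs => ?_).trans_le (by positivity)
      rw [Nat.cast_eq_zero, Set.ncard_eq_zero (Set.toFinite _)]
      refine Set.eq_empty_of_forall_notMem fun a ha => hfL ((hS.1 s hs).2 f (fun x hx => ?_) hf)
      rw [Set.mem_ofPred_eq, leftPart_add_rightPart] at ha
      rw [← hordL f hf] at hx
      obtain ⟨j, -, rfl⟩ := Finset.mem_image.1 hx
      have hj : τ (ordS s (delIdx i j)) = τ (ordL f j) := by
        simpa [Pop, Eop, LinearMap.funLeft_apply] using congrFun ha j
      rw [← hτ hj]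
      exact (hordS s (hS.1 s hs).1).subset (Finset.mem_image_of_mem _ (Finset.mem_univ _))
    · obtain ⟨p, hp⟩ := id hI
      exact sum_ncard_fiber_le hτ hC.le hS hordL hordS hQ (facetOp_surjective i hJ I)
        (leftPart_facetOp_single i J hp) (range_rightPart_facetOp_ne_bot i J hI hI2) _
  refine (Finset.sum_le_card_nsmul _ _ _ hterm).trans ?_
  rw [nsmul_eq_mul]
  calc ((FOfin F k).card : ℝ) * ((k - 1).factorial * (C * (Fintype.card F : ℝ) * L.card))
      ≤ N * ((k - 1).factorial * (C * (Fintype.card F : ℝ) * L.card)) := by gcongr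
    _ = _ := by ring
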